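/- arXiv:math/0607050 — 2 statements merged into one kernel-verified Lean document; each statement's English description precedes it below -/
import Mathlib

section
/- In the Lyapunov–Perron setting, assume ρ := L·(1/(η+β) − 1/(α+η)) < 1. Then for every ξ ∈ H_c the map v ↦ N(v, ξ) has a unique fixed point v*(·; ξ) ∈ C_η⁻, and the map h : H_c → H_s defined by letting h(ξ) be the H_s-component of v*(0; ξ) satisfies h(0) = 0 and ‖h(ξ) − h(ξ̄)‖ ≤ [L/((β+η)(1−ρ))]·‖ξ − ξ̄‖ for all ξ, ξ̄ ∈ H_c. (The graph of h is the Lipschitz invariant manifold.) -/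
open MeasureTheory Set

/-!
Multiplying by the weight `e^{-ηt - ∫₀ᵗ z}` turns `C_η⁻` into the bounded continuous functions on
`(-∞, 0]` and absorbs `z` and `η` into the linear flows: backward in time the centre flow then
decays at rate `-α - η`, and forward in time the stable flow decays at rate `β + η`. Convolution
with a kernel decaying at rate `b` has norm at most `1 / b` in the supremum norm, so the rescaled
Lyapunov–Perron map is `ρ`-Lipschitz in `v` and `1`-Lipschitz in `ξ`.  Its fixed points are
therefore `1 / (1 - ρ)`-Lipschitz in `ξ`, and their stable components, being convolutions
with a kernel of rate `β + η`, gain the extra factor `L / (β + η)`.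
-/

open Function Filter Topology
open scoped BoundedContinuousFunction NNReal ENNReal

section FixedPoint

theorem exists_lipschitz_fixedPoint_family {P X : Type*} [PseudoMetricSpace P] [MetricSpace X]
    [CompleteSpace X] [Nonempty X] (T : P → X → X) {ρ : ℝ} (hρ₀ : 0 ≤ ρ) (hρ : ρ < 1)
    (hT : ∀ ξ ξ' u u', dist (T ξ u) (T ξ' u') ≤ dist ξ ξ' + ρ * dist u u') :
    ∃ φ : P → X, (∀ ξ, IsFixedPt (T ξ) (φ ξ)) ∧ (∀ ξ u, IsFixedPt (T ξ) u → u = φ ξ) ∧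
      ∀ ξ ξ', dist (φ ξ) (φ ξ') ≤ dist ξ ξ' / (1 - ρ) := by
  lift ρ to ℝ≥0 using hρ₀
  have hcontr (ξ : P) : ContractingWith ρ (T ξ) :=
    ⟨mod_cast hρ, .of_dist_le_mul fun u u' => by simpa using hT ξ ξ u u'⟩
  exact ⟨fun ξ => (hcontr ξ).fixedPoint, fun ξ => (hcontr ξ).fixedPoint_isFixedPt,
    fun ξ _ hu => (hcontr ξ).fixedPoint_unique hu,
    fun ξ ξ' => (hcontr ξ).fixedPoint_lipschitz_in_map (hcontr ξ') fun u => by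
      simpa using hT ξ ξ' u u⟩

end FixedPoint

section ExpDecay

@[fun_prop]
theorem continuous_projIic {α : Type*} [LinearOrder α] [TopologicalSpace α]
    [OrderClosedTopology α] (b : α) : Continuous (projIic b) :=
  (continuous_const.min continuous_id).subtype_mk _

variable {E F : Type*} [NormedAddCommGroup E] [NormedSpace ℝ E]
  [NormedAddCommGroup F] [NormedSpace ℝ F]

/-- A strongly continuous family of operators `K r`, `r ≥ 0`, with `‖K r‖ ≤ e^{-br}`. The rate `b`
may be negative, and nothing is asked of `K r` for `r < 0`. -/
structure ExpDecay (K : ℝ → E →L[ℝ] F) (b : ℝ) : Prop where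
  continuousOn : ∀ x, ContinuousOn (fun r => K r x) (Ici 0)
  norm_le : ∀ r, 0 ≤ r → ∀ x, ‖K r x‖ ≤ Real.exp (-b * r) * ‖x‖

namespace ExpDecay

variable {K : ℝ → E →L[ℝ] F} {b : ℝ}

theorem exp_smul (hK : ExpDecay K b) (c : ℝ) :
    ExpDecay (fun r => Real.exp (c * r) • K r) (b - c) where
  continuousOn x :=
    (by fun_prop : Continuous fun r : ℝ => Real.exp (c * r)).continuousOn.smul (hK.continuousOn x)
  norm_le r hr x := by
    calc ‖Real.exp (c * r) • K r x‖ = Real.exp (c * r) * ‖K r x‖ := by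
          rw [norm_smul, Real.norm_eq_abs, Real.abs_exp]
      _ ≤ Real.exp (c * r) * (Real.exp (-b * r) * ‖x‖) := by gcongr; exact hK.norm_le r hr x
      _ = Real.exp (-(b - c) * r) * ‖x‖ := by rw [← mul_assoc, ← Real.exp_add]; ring_nf

theorem norm_apply_le (hK : ExpDecay K b) (hb : 0 ≤ b) {r : ℝ} (hr : 0 ≤ r) (x : E) :
    ‖K r x‖ ≤ ‖x‖ :=
  (hK.norm_le r hr x).trans <| mul_le_of_le_one_left (norm_nonneg x) <|
    Real.exp_le_one_iff.2 (by nlinarith)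

theorem continuous_max_zero (hK : ExpDecay K b) (hb : 0 ≤ b) :
    Continuous fun p : ℝ × E => K (max p.1 0) p.2 :=
  continuous_prod_of_continuous_lipschitzWith' _ 1
    (fun r => lipschitzWith_iff_norm_sub_le.2 fun x y => by
      simpa only [map_sub, NNReal.coe_one, one_mul] using
        hK.norm_apply_le hb (le_max_right r 0) (x - y))
    (fun x => (hK.continuousOn x).comp_continuous (by fun_prop) fun r => le_max_right r 0)

theorem continuousOn_apply (hK : ExpDecay K b) (hb : 0 ≤ b) {φ : ℝ → E} (hφ : Continuous φ) :
    ContinuousOn (fun r => K r (φ r)) (Ici 0) :=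
  ((hK.continuous_max_zero hb).comp (continuous_id.prodMk hφ)).continuousOn.congr fun r hr => by
    simp only [comp_apply, id_eq, max_eq_left (mem_Ici.1 hr)]

theorem ae_norm_apply_le (hK : ExpDecay K b) {φ : ℝ → E} {C : ℝ} (hC : ∀ r, ‖φ r‖ ≤ C) :
    ∀ᵐ r ∂volume.restrict (Ioi 0), ‖K r (φ r)‖ ≤ Real.exp (-b * r) * C := by
  filter_upwards [ae_restrict_mem measurableSet_Ioi] with r hr
  exact (hK.norm_le r (le_of_lt hr) _).trans (by gcongr; exact hC r)

theorem aestronglyMeasurable_apply (hK : ExpDecay K b) (hb : 0 ≤ b) {φ : ℝ → E}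
    (hφ : Continuous φ) :
    AEStronglyMeasurable (fun r => K r (φ r)) (volume.restrict (Ioi 0)) :=
  ((hK.continuousOn_apply hb hφ).mono Ioi_subset_Ici_self).aestronglyMeasurable measurableSet_Ioi

theorem integrableOn_apply (hK : ExpDecay K b) (hb : 0 < b) {φ : ℝ → E} (hφ : Continuous φ)
    {C : ℝ} (hC : ∀ r, ‖φ r‖ ≤ C) : IntegrableOn (fun r => K r (φ r)) (Ioi 0) :=
  ((exp_neg_integrableOn_Ioi 0 hb).mul_const C).mono' (hK.aestronglyMeasurable_apply hb.le hφ)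
    (hK.ae_norm_apply_le hC)

theorem norm_setIntegral_le (hK : ExpDecay K b) (hb : 0 < b) {s : Set ℝ} (hs : s ⊆ Ioi 0)
    {φ : ℝ → E} {C : ℝ} (hC : ∀ r, ‖φ r‖ ≤ C) : ‖∫ r in s, K r (φ r)‖ ≤ C / b := by
  have hC₀ : 0 ≤ C := (norm_nonneg _).trans (hC 0)
  have hbound : IntegrableOn (fun r => Real.exp (-b * r) * C) (Ioi 0) :=
    (exp_neg_integrableOn_Ioi 0 hb).mul_const C
  calc ‖∫ r in s, K r (φ r)‖
      ≤ ∫ r in s, Real.exp (-b * r) * C :=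
        norm_integral_le_of_norm_le (hbound.mono_set hs)
          (ae_restrict_of_ae_restrict_of_subset hs (hK.ae_norm_apply_le hC))
    _ ≤ ∫ r in Ioi 0, Real.exp (-b * r) * C :=
        setIntegral_mono_set hbound (.of_forall fun r => by positivity) hs.eventuallyLE
    _ = C / b := by
        rw [integral_mul_const, integral_exp_mul_Ioi (by linarith)]
        simp [div_eq_inv_mul]

theorem norm_setIntegral_sub_le (hK : ExpDecay K b) (hb : 0 < b) {s : Set ℝ} (hs : s ⊆ Ioi 0)
    {X : Type*} [TopologicalSpace X] (f g : X →ᵇ E) {θ : ℝ → X} (hθ : Continuous θ) :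
    ‖(∫ r in s, K r (f (θ r))) - ∫ r in s, K r (g (θ r))‖ ≤ ‖f - g‖ / b := by
  have hint (h : X →ᵇ E) : IntegrableOn (fun r => K r (h (θ r))) s :=
    (hK.integrableOn_apply hb (h.continuous.comp hθ) fun r => h.norm_coe_le_norm _).mono_set hs
  rw [← integral_sub (hint f) (hint g)]
  simp only [← map_sub]
  exact hK.norm_setIntegral_le hb hs fun r => (f - g).norm_coe_le_norm (θ r)

end ExpDecay

/-- The bounded orbit `t ↦ K (-t) ξ`, `t ≤ 0`, of a flow that decays backward in time; `K` is
the time-reversed flow. -/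
noncomputable def backwardOrbit {K : ℝ → E →L[ℝ] F} {a : ℝ} (hK : ExpDecay K a) (ha : 0 ≤ a)
    (ξ : E) : Iic (0 : ℝ) →ᵇ F :=
  .ofNormedAddCommGroup (fun t => K (-t) ξ)
    ((hK.continuousOn ξ).comp_continuous (by fun_prop) fun t => mem_Ici.2 (neg_nonneg.2 t.2)) ‖ξ‖
    fun t => hK.norm_apply_le ha (neg_nonneg.2 t.2) ξ

/-- The convolution `t ↦ ∫_{-∞}^t K(t - τ) f(τ) dτ` on `(-∞, 0]`, written in terms of the lag
`r = t - τ`. The projection only gives `f` a value outside the range of integration. -/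
noncomputable def pastConvolution {K : ℝ → E →L[ℝ] F} {b : ℝ} (hK : ExpDecay K b) (hb : 0 < b)
    (f : Iic (0 : ℝ) →ᵇ E) : Iic (0 : ℝ) →ᵇ F :=
  .ofNormedAddCommGroup (fun t => ∫ r in Ioi 0, K r (f (projIic 0 (t - r))))
    (continuous_of_dominated
      (fun t => hK.aestronglyMeasurable_apply hb.le (by fun_prop))
      (fun t => hK.ae_norm_apply_le fun r => f.norm_coe_le_norm _)
      ((exp_neg_integrableOn_Ioi 0 hb).mul_const ‖f‖)
      (.of_forall fun r => by fun_prop))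
    (‖f‖ / b) fun _ => hK.norm_setIntegral_le hb subset_rfl fun _ => f.norm_coe_le_norm _

theorem norm_backwardOrbit_sub_le {K : ℝ → E →L[ℝ] F} {a : ℝ} (hK : ExpDecay K a) (ha : 0 ≤ a)
    (ξ ξ' : E) : ‖backwardOrbit hK ha ξ - backwardOrbit hK ha ξ'‖ ≤ ‖ξ - ξ'‖ :=
  (BoundedContinuousFunction.norm_le (norm_nonneg _)).2 fun t => by
    calc ‖K (-t) ξ - K (-t) ξ'‖ = ‖K (-t) (ξ - ξ')‖ := by rw [map_sub]
      _ ≤ ‖ξ - ξ'‖ := hK.norm_apply_le ha (neg_nonneg.2 t.2) _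

theorem norm_pastConvolution_sub_le {K : ℝ → E →L[ℝ] F} {b : ℝ} (hK : ExpDecay K b) (hb : 0 < b)
    (f g : Iic (0 : ℝ) →ᵇ E) :
    ‖pastConvolution hK hb f - pastConvolution hK hb g‖ ≤ ‖f - g‖ / b :=
  (BoundedContinuousFunction.norm_le (by positivity)).2 fun _ =>
    hK.norm_setIntegral_sub_le hb subset_rfl f g (by fun_prop)

theorem ExpDecay.continuous_integral_Ioc_neg {K : ℝ → E →L[ℝ] F} {b : ℝ} (hK : ExpDecay K b)
    (hb : 0 ≤ b) (f : Iic (0 : ℝ) →ᵇ E) :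
    Continuous fun t : Iic (0 : ℝ) => ∫ r in Ioc 0 (-t : ℝ), K r (f (projIic 0 (t + r))) := by
  have hcont : Continuous (uncurry fun (t : Iic (0 : ℝ)) (r : ℝ) =>
      K (max r 0) (f (projIic 0 (t + r)))) :=
    (hK.continuous_max_zero hb).comp
      (f := fun p : Iic (0 : ℝ) × ℝ => (p.2, f (projIic 0 (p.1 + p.2)))) (by fun_prop)
  refine (intervalIntegral.continuous_parametric_intervalIntegral_of_continuous (μ := volume)
    (a₀ := 0) hcont (s := fun t => -t) (by fun_prop)).congr fun t => ?_
  rw [intervalIntegral.integral_of_le (neg_nonneg.2 t.2)]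
  exact setIntegral_congr_fun measurableSet_Ioc fun r hr => by
    simp only [max_eq_left hr.1.le]

/-- The convolution `t ↦ ∫_t^0 K(τ - t) f(τ) dτ` on `(-∞, 0]`, written in terms of `r = τ - t`.
The projection only gives `f` a value outside the range of integration. -/
noncomputable def futureConvolution {K : ℝ → E →L[ℝ] F} {a : ℝ} (hK : ExpDecay K a) (ha : 0 < a)
    (f : Iic (0 : ℝ) →ᵇ E) : Iic (0 : ℝ) →ᵇ F :=
  .ofNormedAddCommGroup (fun t => ∫ r in Ioc 0 (-t : ℝ), K r (f (projIic 0 (t + r))))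
    (hK.continuous_integral_Ioc_neg ha.le f)
    (‖f‖ / a) fun _ => hK.norm_setIntegral_le ha Ioc_subset_Ioi_self fun _ => f.norm_coe_le_norm _

theorem norm_futureConvolution_sub_le {K : ℝ → E →L[ℝ] F} {a : ℝ} (hK : ExpDecay K a)
    (ha : 0 < a) (f g : Iic (0 : ℝ) →ᵇ E) :
    ‖futureConvolution hK ha f - futureConvolution hK ha g‖ ≤ ‖f - g‖ / a :=
  (BoundedContinuousFunction.norm_le (by positivity)).2 fun _ =>
    hK.norm_setIntegral_sub_le ha Ioc_subset_Ioi_self f g (by fun_prop)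

theorem integral_Iic_eq_pastConvolution {K : ℝ → E →L[ℝ] F} {b : ℝ} (hK : ExpDecay K b)
    (hb : 0 < b) (f : Iic (0 : ℝ) →ᵇ E) (t : Iic (0 : ℝ)) :
    ∫ τ in Iic (t : ℝ), K (t - τ) (f (projIic 0 τ)) = pastConvolution hK hb f t := by
  have hpre : (fun τ => (t : ℝ) - τ) ⁻¹' Ici 0 = Iic (t : ℝ) := by ext; simp
  have hsubst := (volume.measurePreserving_sub_left (t : ℝ)).setIntegral_preimage_emb
    (MeasurableEquiv.subLeft (t : ℝ)).measurableEmbedding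
    (fun r => K r (f (projIic 0 (t - r)))) (Ici 0)
  simp only [hpre, sub_sub_cancel, integral_Ici_eq_integral_Ioi] at hsubst
  exact hsubst

theorem integral_zero_eq_neg_futureConvolution {K : ℝ → E →L[ℝ] F} {a : ℝ}
    (hK : ExpDecay (fun r => K (-r)) a) (ha : 0 < a) (f : Iic (0 : ℝ) →ᵇ E) (t : Iic (0 : ℝ)) :
    ∫ τ in (0 : ℝ)..t, K (t - τ) (f (projIic 0 τ)) = -futureConvolution hK ha f t := by
  have hsubst := intervalIntegral.integral_comp_sub_right (a := t) (b := 0)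
    (fun r => K (-r) (f (projIic 0 (t + r)))) (t : ℝ)
  simp only [neg_sub, add_sub_cancel, sub_self, zero_sub] at hsubst
  rw [intervalIntegral.integral_symm, hsubst,
    intervalIntegral.integral_of_le (neg_nonneg.2 t.2)]
  rfl

end ExpDecay

section Superposition

variable {X H F : Type*} [TopologicalSpace X] [NormedAddCommGroup H] [NormedAddCommGroup F]

/-- A jointly continuous nonlinearity `g t x` vanishing at `x = 0` and `L`-Lipschitz in `x`,
uniformly in `t`. -/
structure LipschitzNonlinearity (g : X → H → F) (L : ℝ≥0) : Prop where
  continuous : Continuous fun p : X × H => g p.1 p.2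
  map_zero : ∀ t, g t 0 = 0
  lipschitzWith : ∀ t, LipschitzWith L (g t)

namespace LipschitzNonlinearity

variable {g : X → H → F} {L : ℝ≥0}

theorem norm_le (hg : LipschitzNonlinearity g L) (t : X) (x : H) : ‖g t x‖ ≤ L * ‖x‖ := by
  simpa only [hg.map_zero, sub_zero] using (hg.lipschitzWith t).norm_sub_le x 0

theorem comp_continuous {Y : Type*} [TopologicalSpace Y] (hg : LipschitzNonlinearity g L)
    {f : Y → X} (hf : Continuous f) : LipschitzNonlinearity (fun t => g (f t)) L where
  continuous := hg.continuous.comp (hf.prodMap continuous_id)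
  map_zero t := hg.map_zero (f t)
  lipschitzWith t := hg.lipschitzWith (f t)

theorem conj_smul [NormedSpace ℝ H] [NormedSpace ℝ F] (hg : LipschitzNonlinearity g L)
    {w : X → ℝ} (hw : Continuous w) (hw₀ : ∀ t, 0 < w t) :
    LipschitzNonlinearity (fun t x => w t • g t ((w t)⁻¹ • x)) L where
  continuous := by
    have hwinv : Continuous fun p : X × H => (w p.1)⁻¹ :=
      (hw.comp continuous_fst).inv₀ fun p => (hw₀ p.1).ne'
    exact (hw.comp continuous_fst).smul
      (hg.continuous.comp (continuous_fst.prodMk (hwinv.smul continuous_snd)))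
  map_zero t := by simp only [smul_zero, hg.map_zero]
  lipschitzWith t := LipschitzWith.of_dist_le_mul fun x y => by
    calc dist (w t • g t ((w t)⁻¹ • x)) (w t • g t ((w t)⁻¹ • y))
        = w t * dist (g t ((w t)⁻¹ • x)) (g t ((w t)⁻¹ • y)) := by
          rw [dist_smul₀, Real.norm_of_nonneg (hw₀ t).le]
      _ ≤ w t * (L * dist ((w t)⁻¹ • x) ((w t)⁻¹ • y)) :=
          mul_le_mul_of_nonneg_left ((hg.lipschitzWith t).dist_le_mul _ _) (hw₀ t).le
      _ = L * dist x y := by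
          rw [dist_smul₀, norm_inv, Real.norm_of_nonneg (hw₀ t).le]
          field_simp [(hw₀ t).ne']

end LipschitzNonlinearity

variable {g : X → H → F} {L : ℝ≥0}

/-- The superposition (Nemytskii) operator `u ↦ g(·, u(·))` on bounded continuous functions. -/
noncomputable def superposition (hg : LipschitzNonlinearity g L) (u : X →ᵇ H) : X →ᵇ F :=
  .ofNormedAddCommGroup (fun t => g t (u t))
    (hg.continuous.comp (continuous_id.prodMk u.continuous)) (L * ‖u‖)
    fun t => (hg.norm_le t _).trans (by gcongr; exact u.norm_coe_le_norm t)

theorem norm_superposition_sub_le (hg : LipschitzNonlinearity g L) (u v : X →ᵇ H) :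
    ‖superposition hg u - superposition hg v‖ ≤ L * ‖u - v‖ :=
  (BoundedContinuousFunction.norm_le (by positivity)).2 fun t =>
    ((hg.lipschitzWith t).norm_sub_le _ _).trans (by gcongr; exact (u - v).norm_coe_le_norm t)

theorem superposition_zero (hg : LipschitzNonlinearity g L) : superposition hg 0 = 0 :=
  BoundedContinuousFunction.ext hg.map_zero

end Superposition

section ConvolutionSuperposition

variable {H E F : Type*} [NormedAddCommGroup H] [NormedAddCommGroup E] [NormedSpace ℝ E]
  [NormedAddCommGroup F] [NormedSpace ℝ F] {K : ℝ → E →L[ℝ] F} {b : ℝ}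
  {g : Iic (0 : ℝ) → H → E} {L : ℝ≥0}

theorem norm_pastConvolution_superposition_sub_le (hK : ExpDecay K b) (hb : 0 < b)
    (hg : LipschitzNonlinearity g L) (u v : Iic (0 : ℝ) →ᵇ H) :
    ‖pastConvolution hK hb (superposition hg u) - pastConvolution hK hb (superposition hg v)‖ ≤
      L / b * ‖u - v‖ :=
  calc _ ≤ ‖superposition hg u - superposition hg v‖ / b := norm_pastConvolution_sub_le ..
    _ ≤ L * ‖u - v‖ / b := by gcongr; exact norm_superposition_sub_le ..
    _ = L / b * ‖u - v‖ := by ring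

theorem norm_futureConvolution_superposition_sub_le (hK : ExpDecay K b) (hb : 0 < b)
    (hg : LipschitzNonlinearity g L) (u v : Iic (0 : ℝ) →ᵇ H) :
    ‖futureConvolution hK hb (superposition hg u) -
        futureConvolution hK hb (superposition hg v)‖ ≤ L / b * ‖u - v‖ :=
  calc _ ≤ ‖superposition hg u - superposition hg v‖ / b := norm_futureConvolution_sub_le ..
    _ ≤ L * ‖u - v‖ / b := by gcongr; exact norm_superposition_sub_le ..
    _ = L / b * ‖u - v‖ := by ring

end ConvolutionSuperposition

section Pairing

variable {E F : Type*} [NormedAddCommGroup E] [NormedAddCommGroup F] {p : ℝ≥0∞} [Fact (1 ≤ p)]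

theorem norm_toLp_prod_le_add (x : E) (y : F) : ‖WithLp.toLp p (x, y)‖ ≤ ‖x‖ + ‖y‖ := by
  have hsplit : WithLp.toLp p (x, y) = WithLp.toLp p (x, 0) + WithLp.toLp p (0, y) := by
    simp [← WithLp.toLp_add]
  calc ‖WithLp.toLp p (x, y)‖
      ≤ ‖WithLp.toLp p (x, (0 : F))‖ + ‖WithLp.toLp p ((0 : E), y)‖ := hsplit ▸ norm_add_le _ _
    _ = ‖x‖ + ‖y‖ := by rw [WithLp.norm_toLp_fst, WithLp.norm_toLp_snd]

/-- The `L^p` product `t ↦ (f t, g t)` of two bounded continuous functions. -/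
noncomputable def pairLp {X : Type*} [TopologicalSpace X] (p : ℝ≥0∞) [Fact (1 ≤ p)]
    (f : X →ᵇ E) (g : X →ᵇ F) : X →ᵇ WithLp p (E × F) :=
  .ofNormedAddCommGroup (fun t => WithLp.toLp p (f t, g t))
    ((WithLp.prod_continuous_toLp p E F).comp (f.continuous.prodMk g.continuous)) (‖f‖ + ‖g‖)
    fun t => (norm_toLp_prod_le_add _ _).trans
      (add_le_add (f.norm_coe_le_norm t) (g.norm_coe_le_norm t))

theorem norm_pairLp_sub_le {X : Type*} [TopologicalSpace X] (f f' : X →ᵇ E) (g g' : X →ᵇ F) :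
    ‖pairLp p f g - pairLp p f' g'‖ ≤ ‖f - f'‖ + ‖g - g'‖ :=
  (BoundedContinuousFunction.norm_le (by positivity)).2 fun t =>
    (norm_toLp_prod_le_add (p := p) ((f - f') t) ((g - g') t)).trans
      (add_le_add ((f - f').norm_coe_le_norm t) ((g - g').norm_coe_le_norm t))

end Pairing

section BoundedMap

variable {E F : Type*} [NormedAddCommGroup E] [NormedSpace ℝ E]
  [NormedAddCommGroup F] [NormedSpace ℝ F] {p : ℝ≥0∞} [Fact (1 ≤ p)]
  {A : ℝ → E →L[ℝ] E} {B : ℝ → F →L[ℝ] F} {a b : ℝ}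
  {gc : Iic (0 : ℝ) → WithLp p (E × F) → E} {gs : Iic (0 : ℝ) → WithLp p (E × F) → F} {L : ℝ≥0}
  (hA : ExpDecay A a) (ha : 0 < a) (hB : ExpDecay B b) (hb : 0 < b)
  (hgc : LipschitzNonlinearity gc L) (hgs : LipschitzNonlinearity gs L)

/-- The Lyapunov–Perron map after the weight has been absorbed into the linear flows and the
nonlinearities; `A` is the time-reversed centre flow, whence the sign of its Duhamel integral. -/
noncomputable def boundedLyapunovPerron (ξ : E) (u : Iic (0 : ℝ) →ᵇ WithLp p (E × F)) :
    Iic (0 : ℝ) →ᵇ WithLp p (E × F) :=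
  pairLp p (backwardOrbit hA ha.le ξ - futureConvolution hA ha (superposition hgc u))
    (pastConvolution hB hb (superposition hgs u))

theorem dist_boundedLyapunovPerron_le (ξ ξ' : E) (u u' : Iic (0 : ℝ) →ᵇ WithLp p (E × F)) :
    dist (boundedLyapunovPerron hA ha hB hb hgc hgs ξ u)
        (boundedLyapunovPerron hA ha hB hb hgc hgs ξ' u') ≤
      dist ξ ξ' + L * (1 / b + 1 / a) * dist u u' := by
  have hcentre :
      ‖backwardOrbit hA ha.le ξ - futureConvolution hA ha (superposition hgc u) -
          (backwardOrbit hA ha.le ξ' - futureConvolution hA ha (superposition hgc u'))‖ ≤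
        ‖ξ - ξ'‖ + L / a * ‖u - u'‖ := by
    rw [sub_sub_sub_comm]
    exact (norm_sub_le _ _).trans (add_le_add (norm_backwardOrbit_sub_le hA ha.le ξ ξ')
      (norm_futureConvolution_superposition_sub_le hA ha hgc u u'))
  simp only [dist_eq_norm]
  calc _ ≤ ‖ξ - ξ'‖ + L / a * ‖u - u'‖ + L / b * ‖u - u'‖ :=
        (norm_pairLp_sub_le _ _ _ _).trans (add_le_add hcentre
          (norm_pastConvolution_superposition_sub_le hB hb hgs u u'))
    _ = ‖ξ - ξ'‖ + L * (1 / b + 1 / a) * ‖u - u'‖ := by ring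

theorem isFixedPt_boundedLyapunovPerron_zero :
    IsFixedPt (boundedLyapunovPerron hA ha hB hb hgc hgs 0) 0 := by
  ext1 t
  simp [boundedLyapunovPerron, superposition_zero, pairLp, backwardOrbit, futureConvolution,
    pastConvolution]

variable {hA ha hB hb hgc hgs} in
theorem norm_snd_sub_le_of_isFixedPt {ξ ξ' : E} {u u' : Iic (0 : ℝ) →ᵇ WithLp p (E × F)}
    (hu : IsFixedPt (boundedLyapunovPerron hA ha hB hb hgc hgs ξ) u)
    (hu' : IsFixedPt (boundedLyapunovPerron hA ha hB hb hgc hgs ξ') u') (t : Iic (0 : ℝ)) :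
    ‖(u t).snd - (u' t).snd‖ ≤ L / b * ‖u - u'‖ := by
  have hsnd {ξ : E} {u : Iic (0 : ℝ) →ᵇ WithLp p (E × F)}
      (hu : IsFixedPt (boundedLyapunovPerron hA ha hB hb hgc hgs ξ) u) :
      (u t).snd = pastConvolution hB hb (superposition hgs u) t :=
    congrArg (fun v => (v t).snd) hu.eq.symm
  rw [hsnd hu, hsnd hu']
  exact (BoundedContinuousFunction.norm_coe_le_norm (_ - _) t).trans
    (norm_pastConvolution_superposition_sub_le hB hb hgs u u')

theorem exists_fixedPoint_boundedLyapunovPerron [CompleteSpace E] [CompleteSpace F]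
    (hρ : L * (1 / b + 1 / a) < 1) :
    ∃ φ : E → Iic (0 : ℝ) →ᵇ WithLp p (E × F),
      (∀ ξ, IsFixedPt (boundedLyapunovPerron hA ha hB hb hgc hgs ξ) (φ ξ)) ∧
      (∀ ξ u, IsFixedPt (boundedLyapunovPerron hA ha hB hb hgc hgs ξ) u → u = φ ξ) ∧
      φ 0 = 0 ∧
      ∀ ξ ξ' t, ‖(φ ξ t).snd - (φ ξ' t).snd‖ ≤
        L / (b * (1 - L * (1 / b + 1 / a))) * ‖ξ - ξ'‖ := by
  obtain ⟨φ, hfix, huniq, hlip⟩ := exists_lipschitz_fixedPoint_family _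
    (show 0 ≤ L * (1 / b + 1 / a) by positivity) hρ
    (dist_boundedLyapunovPerron_le hA ha hB hb hgc hgs)
  refine ⟨φ, hfix, huniq,
    (huniq 0 0 (isFixedPt_boundedLyapunovPerron_zero hA ha hB hb hgc hgs)).symm,
    fun ξ ξ' t => ?_⟩
  calc ‖(φ ξ t).snd - (φ ξ' t).snd‖
      ≤ L / b * ‖φ ξ - φ ξ'‖ := norm_snd_sub_le_of_isFixedPt (hfix ξ) (hfix ξ') t
    _ ≤ L / b * (‖ξ - ξ'‖ / (1 - L * (1 / b + 1 / a))) := by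
        gcongr
        simpa only [dist_eq_norm] using hlip ξ ξ'
    _ = L / (b * (1 - L * (1 / b + 1 / a))) * ‖ξ - ξ'‖ := by rw [mul_div_left_comm, div_div]; ring

end BoundedMap

section Weight

/-- The weight `e^{-ηt - ∫₀ᵗ z}` defining the norm of `C_η⁻`. -/
noncomputable def weight (η : ℝ) (z : ℝ → ℝ) (t : ℝ) : ℝ :=
  Real.exp (-η * t - ∫ s in (0 : ℝ)..t, z s)

variable {η : ℝ} {z : ℝ → ℝ}

theorem weight_pos (η : ℝ) (z : ℝ → ℝ) (t : ℝ) : 0 < weight η z t := Real.exp_pos _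

theorem weight_zero (η : ℝ) (z : ℝ → ℝ) : weight η z 0 = 1 := by simp [weight]

theorem intervalIntegrable_of_locallyIntegrable {E : Type*} [NormedAddCommGroup E] {f : ℝ → E}
    {μ : Measure ℝ} (hf : LocallyIntegrable f μ) (s t : ℝ) : IntervalIntegrable f μ s t :=
  (hf.integrableOn_isCompact isCompact_uIcc).intervalIntegrable

theorem continuous_weight (hz : LocallyIntegrable z) : Continuous (weight η z) := by
  have hprimitive :=
    intervalIntegral.continuous_primitive (intervalIntegrable_of_locallyIntegrable hz) 0
  unfold weight
  fun_prop

theorem weight_mul_exp_integral (hz : LocallyIntegrable z) (τ t : ℝ) :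
    weight η z t * Real.exp (∫ s in τ..t, z s) = Real.exp (-η * (t - τ)) * weight η z τ := by
  have hadd := intervalIntegral.integral_add_adjacent_intervals
    (intervalIntegrable_of_locallyIntegrable hz 0 τ)
    (intervalIntegrable_of_locallyIntegrable hz τ t)
  simp only [weight, ← Real.exp_add, ← hadd]
  ring_nf

theorem weight_smul_exp_integral_smul {E F : Type*} [NormedAddCommGroup E] [NormedSpace ℝ E]
    [NormedAddCommGroup F] [NormedSpace ℝ F] (hz : LocallyIntegrable z) (T : E →L[ℝ] F)
    (x : E) (τ t : ℝ) :
    weight η z t • Real.exp (∫ s in τ..t, z s) • T x =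
      (Real.exp (-η * (t - τ)) • T) (weight η z τ • x) := by
  rw [smul_smul, weight_mul_exp_integral hz, mul_smul, ← map_smul T]
  rfl

/-- Membership of `v`, restricted to `(-∞, 0]`, in the weighted space `C_η⁻`. -/
def MemWeighted {H : Type*} [NormedAddCommGroup H] (η : ℝ) (z : ℝ → ℝ) (v : ℝ → H) : Prop :=
  ContinuousOn v (Iic 0) ∧ BddAbove ((fun t => weight η z t * ‖v t‖) '' Iic 0)

theorem memWeighted_iff_exists {H : Type*} [NormedAddCommGroup H] [NormedSpace ℝ H]
    (hz : LocallyIntegrable z) {v : ℝ → H} :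
    MemWeighted η z v ↔
      ∃ u : Iic (0 : ℝ) →ᵇ H, ∀ t : Iic (0 : ℝ), u t = weight η z t • v t := by
  have hw : Continuous (weight η z) := continuous_weight hz
  have hnorm (t : ℝ) : ‖weight η z t • v t‖ = weight η z t * ‖v t‖ := by
    rw [norm_smul, Real.norm_of_nonneg (weight_pos η z t).le]
  constructor
  · rintro ⟨hcont, C, hC⟩
    exact ⟨.ofNormedAddCommGroup (fun t => weight η z t • v t)
      (hw.continuousOn.smul hcont).domRestrict C
      fun t => (hnorm t).trans_le (hC (mem_image_of_mem _ t.2)), fun _ => rfl⟩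
  · rintro ⟨u, hu⟩
    refine ⟨?_, ‖u‖, forall_mem_image.2 fun t ht => ?_⟩
    · have hrestrict : (Iic 0).domRestrict v = fun t : Iic (0 : ℝ) => (weight η z t)⁻¹ • u t := by
        ext1 t
        rw [hu, inv_smul_smul₀ (weight_pos η z t).ne', domRestrict_apply]
      rw [continuousOn_iff_continuous_domRestrict, hrestrict]
      exact ((hw.comp continuous_subtype_val).inv₀ fun t => (weight_pos η z t.1).ne').smul
        u.continuous
    · exact (hnorm t).symm.trans_le (hu ⟨t, ht⟩ ▸ u.norm_coe_le_norm _)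

end Weight

section LyapunovPerron

variable {E F : Type*} [NormedAddCommGroup E] [NormedSpace ℝ E]
  [NormedAddCommGroup F] [NormedSpace ℝ F] {p : ℝ≥0∞} [Fact (1 ≤ p)]

/-- The Lyapunov–Perron map `N(v, ξ)`, with centre flow `Sc` on `E` and stable flow `Ss` on
`F`. -/
noncomputable def lyapunovPerron (Sc : ℝ → E →L[ℝ] E) (Ss : ℝ → F →L[ℝ] F) (z : ℝ → ℝ)
    (gc : ℝ → WithLp p (E × F) → E) (gs : ℝ → WithLp p (E × F) → F)
    (v : ℝ → WithLp p (E × F)) (ξ : E) (t : ℝ) : WithLp p (E × F) :=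
  WithLp.toLp p
    (Real.exp (∫ s in (0 : ℝ)..t, z s) • Sc t ξ +
      ∫ τ in (0 : ℝ)..t, Real.exp (∫ s in τ..t, z s) • Sc (t - τ) (gc τ (v τ)),
     ∫ τ in Iic t, Real.exp (∫ s in τ..t, z s) • Ss (t - τ) (gs τ (v τ)))

variable {Sc : ℝ → E →L[ℝ] E} {Ss : ℝ → F →L[ℝ] F} {z : ℝ → ℝ}
  {gc : ℝ → WithLp p (E × F) → E} {gs : ℝ → WithLp p (E × F) → F} {η a b : ℝ} {L : ℝ≥0}

/-- The conjugate of a nonlinearity on past times by the weight of `C_η⁻`. -/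
noncomputable def weightedNonlinearity {H G : Type*} [NormedAddCommGroup H] [NormedSpace ℝ H]
    [NormedAddCommGroup G] [NormedSpace ℝ G] (η : ℝ) (z : ℝ → ℝ) (g : ℝ → H → G)
    (t : Iic (0 : ℝ)) (x : H) : G :=
  weight η z t • g t ((weight η z t)⁻¹ • x)

theorem LipschitzNonlinearity.weightedNonlinearity {H G : Type*} [NormedAddCommGroup H]
    [NormedSpace ℝ H] [NormedAddCommGroup G] [NormedSpace ℝ G] {g : ℝ → H → G}
    (hg : LipschitzNonlinearity (fun t : Iic (0 : ℝ) => g t) L) (η : ℝ)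
    (hz : LocallyIntegrable z) : LipschitzNonlinearity (weightedNonlinearity η z g) L :=
  hg.conj_smul ((continuous_weight hz).comp continuous_subtype_val) fun t => weight_pos η z t

theorem superposition_weightedNonlinearity_apply {H G : Type*} [NormedAddCommGroup H]
    [NormedSpace ℝ H] [NormedAddCommGroup G] [NormedSpace ℝ G] {g : ℝ → H → G}
    (hg : LipschitzNonlinearity (weightedNonlinearity η z g) L) {v : ℝ → H}
    {u : Iic (0 : ℝ) →ᵇ H} (hu : ∀ t : Iic (0 : ℝ), u t = weight η z t • v t)
    {τ : ℝ} (hτ : τ ≤ 0) :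
    superposition hg u (projIic 0 τ) = weight η z τ • g τ (v τ) := by
  rw [projIic_of_mem hτ]
  simp only [superposition, BoundedContinuousFunction.coe_ofNormedAddCommGroup,
    weightedNonlinearity, hu, inv_smul_smul₀ (weight_pos η z τ).ne']

theorem weight_smul_integral_Iic {H : Type*} [NormedAddCommGroup H] [NormedSpace ℝ H]
    (hz : LocallyIntegrable z) {g : ℝ → H → F}
    (hS : ExpDecay (fun r => Real.exp (-η * r) • Ss r) b) (hb : 0 < b)
    (hg : LipschitzNonlinearity (weightedNonlinearity η z g) L) {v : ℝ → H}
    {u : Iic (0 : ℝ) →ᵇ H} (hu : ∀ t : Iic (0 : ℝ), u t = weight η z t • v t)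
    (t : Iic (0 : ℝ)) :
    weight η z t • ∫ τ in Iic (t : ℝ), Real.exp (∫ s in τ..t, z s) • Ss (t - τ) (g τ (v τ)) =
      pastConvolution hS hb (superposition hg u) t :=
  calc _ = ∫ τ in Iic (t : ℝ),
          (Real.exp (-η * (t - τ)) • Ss (t - τ)) (superposition hg u (projIic 0 τ)) := by
        rw [← integral_smul]
        refine setIntegral_congr_fun measurableSet_Iic fun τ hτ => ?_
        simp only [weight_smul_exp_integral_smul hz,
          superposition_weightedNonlinearity_apply hg hu ((mem_Iic.1 hτ).trans t.2)]
    _ = _ := integral_Iic_eq_pastConvolution hS hb _ t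

theorem weight_smul_integral_zero {H : Type*} [NormedAddCommGroup H] [NormedSpace ℝ H]
    (hz : LocallyIntegrable z) {g : ℝ → H → E}
    (hS : ExpDecay (fun r => Real.exp (-η * -r) • Sc (-r)) a) (ha : 0 < a)
    (hg : LipschitzNonlinearity (weightedNonlinearity η z g) L) {v : ℝ → H}
    {u : Iic (0 : ℝ) →ᵇ H} (hu : ∀ t : Iic (0 : ℝ), u t = weight η z t • v t)
    (t : Iic (0 : ℝ)) :
    weight η z t • ∫ τ in (0 : ℝ)..t, Real.exp (∫ s in τ..t, z s) • Sc (t - τ) (g τ (v τ)) =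
      -futureConvolution hS ha (superposition hg u) t :=
  calc _ = ∫ τ in (0 : ℝ)..t,
          (Real.exp (-η * (t - τ)) • Sc (t - τ)) (superposition hg u (projIic 0 τ)) := by
        rw [← intervalIntegral.integral_smul]
        refine intervalIntegral.integral_congr fun τ hτ => ?_
        have hτ₀ : τ ≤ 0 := by simpa [max_eq_left t.2.out] using hτ.2
        simp only [weight_smul_exp_integral_smul hz,
          superposition_weightedNonlinearity_apply hg hu hτ₀]
    _ = _ := integral_zero_eq_neg_futureConvolution
        (K := fun r => Real.exp (-η * r) • Sc r) hS ha _ t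

theorem weight_smul_orbit (hz : LocallyIntegrable z)
    (hS : ExpDecay (fun r => Real.exp (-η * -r) • Sc (-r)) a) (ha : 0 ≤ a) (ξ : E)
    (t : Iic (0 : ℝ)) :
    weight η z t • Real.exp (∫ s in (0 : ℝ)..t, z s) • Sc t ξ = backwardOrbit hS ha ξ t := by
  rw [weight_smul_exp_integral_smul hz, weight_zero, one_smul]
  simp only [backwardOrbit, BoundedContinuousFunction.coe_ofNormedAddCommGroup, neg_neg, sub_zero]

section Conjugation

variable (hz : LocallyIntegrable z)
  {hA : ExpDecay (fun r => Real.exp (-η * -r) • Sc (-r)) a} {ha : 0 < a}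
  {hB : ExpDecay (fun r => Real.exp (-η * r) • Ss r) b} {hb : 0 < b}
  {hgc : LipschitzNonlinearity (weightedNonlinearity η z gc) L}
  {hgs : LipschitzNonlinearity (weightedNonlinearity η z gs) L}
  {v : ℝ → WithLp p (E × F)} {u : Iic (0 : ℝ) →ᵇ WithLp p (E × F)}
  (hu : ∀ t : Iic (0 : ℝ), u t = weight η z t • v t)
include hz hu

theorem weight_smul_lyapunovPerron (ξ : E) (t : Iic (0 : ℝ)) :
    weight η z t • lyapunovPerron Sc Ss z gc gs v ξ t =
      boundedLyapunovPerron hA ha hB hb hgc hgs ξ u t := by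
  rw [lyapunovPerron, ← WithLp.toLp_smul, Prod.smul_mk, smul_add, weight_smul_orbit hz hA ha.le,
    weight_smul_integral_zero hz hA ha hgc hu, weight_smul_integral_Iic hz hB hb hgs hu,
    ← sub_eq_add_neg]
  rfl

theorem isFixedPt_boundedLyapunovPerron_iff (ξ : E) :
    IsFixedPt (boundedLyapunovPerron hA ha hB hb hgc hgs ξ) u ↔
      EqOn (lyapunovPerron Sc Ss z gc gs v ξ) v (Iic 0) := by
  simp only [IsFixedPt, BoundedContinuousFunction.ext_iff, ← weight_smul_lyapunovPerron hz hu, hu,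
    smul_right_inj (weight_pos η z _).ne', Subtype.forall, EqOn]

end Conjugation

theorem stmt_2_general [CompleteSpace E] [CompleteSpace F] {α β : ℝ} (hβη : -β < η)
    (hηα : η < -α) (hSc : ExpDecay (fun r => Sc (-r)) (-α)) (hSs : ExpDecay Ss β)
    (hz : LocallyIntegrable z) (hgc : LipschitzNonlinearity (fun t : Iic (0 : ℝ) => gc t) L)
    (hgs : LipschitzNonlinearity (fun t : Iic (0 : ℝ) => gs t) L)
    (hρ : L * (1 / (η + β) - 1 / (α + η)) < 1) :
    ∃ vstar : E → ℝ → WithLp p (E × F),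
      (∀ ξ, MemWeighted η z (vstar ξ) ∧
        EqOn (lyapunovPerron Sc Ss z gc gs (vstar ξ) ξ) (vstar ξ) (Iic 0)) ∧
      (∀ ξ v, MemWeighted η z v → EqOn (lyapunovPerron Sc Ss z gc gs v ξ) v (Iic 0) →
        EqOn v (vstar ξ) (Iic 0)) ∧
      (vstar 0 0).snd = 0 ∧
      ∀ ξ ξ', ‖(vstar ξ 0).snd - (vstar ξ' 0).snd‖ ≤
        L / ((β + η) * (1 - L * (1 / (η + β) - 1 / (α + η)))) * ‖ξ - ξ'‖ := by
  have hA : ExpDecay (fun r => Real.exp (-η * -r) • Sc (-r)) (-(α + η)) := by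
    simpa only [neg_mul_neg, neg_add'] using hSc.exp_smul η
  have hB : ExpDecay (fun r => Real.exp (-η * r) • Ss r) (η + β) := by
    simpa only [sub_neg_eq_add, add_comm] using hSs.exp_smul (-η)
  rw [sub_eq_add_neg, ← div_neg] at hρ
  obtain ⟨φ, hfix, huniq, hzero, hlip⟩ := exists_fixedPoint_boundedLyapunovPerron hA
    (by linarith) hB (by linarith) (hgc.weightedNonlinearity η hz)
    (hgs.weightedNonlinearity η hz) hρ
  let vstar (ξ : E) (t : ℝ) : WithLp p (E × F) := (weight η z t)⁻¹ • φ ξ (projIic 0 t)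
  have hφ (ξ : E) (t : Iic (0 : ℝ)) : φ ξ t = weight η z t • vstar ξ t := by
    simp only [vstar, projIic_coe, smul_inv_smul₀ (weight_pos η z t).ne']
  have hvstar_zero (ξ : E) : vstar ξ 0 = φ ξ ⟨0, self_mem_Iic⟩ := by
    rw [hφ ξ ⟨0, self_mem_Iic⟩, weight_zero, one_smul]
  refine ⟨vstar, fun ξ => ⟨(memWeighted_iff_exists hz).2 ⟨φ ξ, hφ ξ⟩,
    (isFixedPt_boundedLyapunovPerron_iff hz (hφ ξ) ξ).1 (hfix ξ)⟩, fun ξ v hv hvfix t ht => ?_,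
    by simp [hvstar_zero, hzero], fun ξ ξ' => ?_⟩
  · obtain ⟨u, hu⟩ := (memWeighted_iff_exists hz).1 hv
    obtain rfl := huniq ξ u ((isFixedPt_boundedLyapunovPerron_iff hz hu ξ).2 hvfix)
    exact smul_right_injective _ (weight_pos η z t).ne' ((hu ⟨t, ht⟩).symm.trans (hφ ξ ⟨t, ht⟩))
  · rw [hvstar_zero, hvstar_zero, add_comm β, sub_eq_add_neg (1 / (η + β)), ← div_neg]
    exact hlip ξ ξ' _

end LyapunovPerron

/-- Under the gap condition `ρ = L·(1/(η+β) − 1/(α+η)) < 1`, the Lyapunov–Perron map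
`N(·, ξ)` has a unique fixed point `v*(·; ξ)` in `C_η⁻` for each `ξ ∈ H_c`, and the map
`h(ξ) := (v*(0; ξ))_s` satisfies `h(0) = 0` and is Lipschitz with constant
`L/((β+η)(1−ρ))`; its graph is the Lipschitz invariant manifold. -/
theorem stmt_2
    {Hc Hs : Type*}
    [NormedAddCommGroup Hc] [InnerProductSpace ℝ Hc] [CompleteSpace Hc]
    [TopologicalSpace.SeparableSpace Hc]
    [NormedAddCommGroup Hs] [InnerProductSpace ℝ Hs] [CompleteSpace Hs]
    [TopologicalSpace.SeparableSpace Hs]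
    (α β η : ℝ) (hα : 0 ≤ α) (hαβ : α < β) (hη1 : -β < η) (hη2 : η < -α)
    (Sc : ℝ → Hc →L[ℝ] Hc)
    (hSc0 : Sc 0 = ContinuousLinearMap.id ℝ Hc)
    (hScgrp : ∀ s t : ℝ, Sc (s + t) = (Sc s).comp (Sc t))
    (hSccont : ∀ x : Hc, Continuous fun t => Sc t x)
    (hScbnd : ∀ t : ℝ, t ≤ 0 → ∀ x : Hc, ‖Sc t x‖ ≤ Real.exp (-α * t) * ‖x‖)
    (Ss : ℝ → Hs →L[ℝ] Hs)
    (hSs0 : Ss 0 = ContinuousLinearMap.id ℝ Hs)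
    (hSsgrp : ∀ s t : ℝ, 0 ≤ s → 0 ≤ t → Ss (s + t) = (Ss s).comp (Ss t))
    (hSscont : ∀ x : Hs, ContinuousOn (fun t => Ss t x) (Ici 0))
    (hSsbnd : ∀ t : ℝ, 0 ≤ t → ∀ x : Hs, ‖Ss t x‖ ≤ Real.exp (-β * t) * ‖x‖)
    (z : ℝ → ℝ) (hz : Continuous z)
    (L : ℝ) (hL : 0 ≤ L)
    (gc : ℝ → WithLp 2 (Hc × Hs) → Hc)
    (gs : ℝ → WithLp 2 (Hc × Hs) → Hs)
    (hgcCont : Continuous fun p : ℝ × WithLp 2 (Hc × Hs) => gc p.1 p.2)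
    (hgsCont : Continuous fun p : ℝ × WithLp 2 (Hc × Hs) => gs p.1 p.2)
    (hgc0 : ∀ t : ℝ, gc t 0 = 0) (hgs0 : ∀ t : ℝ, gs t 0 = 0)
    (hgcLip : ∀ (t : ℝ) (x y : WithLp 2 (Hc × Hs)), ‖gc t x - gc t y‖ ≤ L * ‖x - y‖)
    (hgsLip : ∀ (t : ℝ) (x y : WithLp 2 (Hc × Hs)), ‖gs t x - gs t y‖ ≤ L * ‖x - y‖)
    (memC : (ℝ → WithLp 2 (Hc × Hs)) → Prop)
    (hmemC : ∀ v, memC v ↔ ContinuousOn v (Iic 0) ∧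
      BddAbove ((fun t => Real.exp (-η * t - ∫ s in (0:ℝ)..t, z s) * ‖v t‖) '' Iic 0))
    (N : (ℝ → WithLp 2 (Hc × Hs)) → Hc → ℝ → WithLp 2 (Hc × Hs))
    (hN : ∀ v ξ t, N v ξ t = (WithLp.equiv 2 (Hc × Hs)).symm
      (Real.exp (∫ s in (0:ℝ)..t, z s) • Sc t ξ +
        ∫ τ in (0:ℝ)..t, Real.exp (∫ s in τ..t, z s) • Sc (t - τ) (gc τ (v τ)),
       ∫ τ in Iic t, Real.exp (∫ s in τ..t, z s) • Ss (t - τ) (gs τ (v τ))))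
    -- the gap condition
    (ρ : ℝ) (hρdef : ρ = L * (1 / (η + β) - 1 / (α + η))) (hρ : ρ < 1) :
    ∃ vstar : Hc → ℝ → WithLp 2 (Hc × Hs),
      -- `vstar ξ` is a fixed point of `N(·, ξ)` in `C_η⁻`
      (∀ ξ : Hc, memC (vstar ξ) ∧ EqOn (N (vstar ξ) ξ) (vstar ξ) (Iic 0)) ∧
      -- and it is the unique such fixed point
      (∀ (ξ : Hc) (v : ℝ → WithLp 2 (Hc × Hs)), memC v →
        EqOn (N v ξ) v (Iic 0) → EqOn v (vstar ξ) (Iic 0)) ∧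
      -- the manifold map `h ξ := (vstar ξ 0)_s` vanishes at `0` and is Lipschitz
      ((WithLp.equiv 2 (Hc × Hs)) (vstar 0 0)).2 = 0 ∧
      (∀ ξ ξ' : Hc,
        ‖((WithLp.equiv 2 (Hc × Hs)) (vstar ξ 0)).2 -
            ((WithLp.equiv 2 (Hc × Hs)) (vstar ξ' 0)).2‖ ≤
          L / ((β + η) * (1 - ρ)) * ‖ξ - ξ'‖) := by
  lift L to ℝ≥0 using hL
  subst hρdef
  obtain rfl : memC = MemWeighted η z := funext fun v => propext (hmemC v)
  obtain rfl : N = lyapunovPerron Sc Ss z gc gs :=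
    funext fun v => funext fun ξ => funext fun t => hN v ξ t
  have hgc : LipschitzNonlinearity gc L :=
    ⟨hgcCont, hgc0, fun t => lipschitzWith_iff_norm_sub_le.2 (hgcLip t)⟩
  have hgs : LipschitzNonlinearity gs L :=
    ⟨hgsCont, hgs0, fun t => lipschitzWith_iff_norm_sub_le.2 (hgsLip t)⟩
  have hScdecay : ExpDecay (fun r => Sc (-r)) (-α) :=
    ⟨fun x => ((hSccont x).comp continuous_neg).continuousOn,
      fun r hr x => by simpa using hScbnd (-r) (neg_nonpos.2 hr) x⟩
  exact stmt_2_general hη1 hη2 hScdecay ⟨hSscont, hSsbnd⟩ hz.locallyIntegrable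
    (hgc.comp_continuous continuous_subtype_val) (hgs.comp_continuous continuous_subtype_val) hρ
end

section
/- Let ω : ℝ → ℝ be continuous with ω(t)/t → 0 as t → +∞ and as t → −∞ (in particular s ↦ e^s·ω(s) is integrable on (−∞, 0]), and define z_ω(t) = ω(t) − ∫_{−∞}^t e^{s−t}·ω(s) ds. Then (1/t)·∫_0^t z_ω(s) ds → 0 as t → +∞ and as t → −∞. -/
open MeasureTheory Filter

/-!
The exponentially weighted average `A t = ∫_{-∞}^t e^{s-t} ω s ds` solves `A' = ω - A = z`, so the
integral of `z` over `[0, t]` is just `A t - A 0`. Writing `A t = ∫_0^∞ e^{-u} ω (t - u) du`, the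
bound `‖ω s‖ ≤ ε‖s‖ + C` passes to `A`, up to constants, because the kernel `e^{-u}` has finite mass
and finite first moment; hence `A t = o(t)`.
-/

section SublinearGrowth

open Asymptotics Bornology

variable {G E : Type*} [NormedAddCommGroup G] [NormedAddCommGroup E] {ω : G → E}

theorem exists_forall_norm_le_mul_norm_add_of_isLittleO [ProperSpace G] (hω : Continuous ω)
    (hsub : ω =o[cobounded G] (id : G → G)) {ε : ℝ} (hε : 0 < ε) :
    ∃ C, ∀ s, ‖ω s‖ ≤ ε * ‖s‖ + C := by
  have hcompact : ∀ᶠ s in cocompact G, ‖ω s‖ ≤ ε * ‖s‖ := by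
    simpa only [Metric.cobounded_eq_cocompact, id] using hsub.def hε
  obtain ⟨K, hK, hfar⟩ := mem_cocompact.1 hcompact
  obtain ⟨C, hC⟩ := hK.exists_bound_of_continuousOn hω.continuousOn
  refine ⟨max C 0, fun s => ?_⟩
  by_cases hs : s ∈ K
  · exact (hC s hs).trans <| (le_max_left C 0).trans <| le_add_of_nonneg_left (by positivity)
  · exact (hfar hs).trans <| le_add_of_nonneg_right (le_max_right C 0)

theorem isLittleO_id_cobounded_of_forall_exists_norm_le
    (hbound : ∀ ε > 0, ∃ C, ∀ s, ‖ω s‖ ≤ ε * ‖s‖ + C) : ω =o[cobounded G] (id : G → G) := by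
  refine IsLittleO.of_bound fun ε hε => ?_
  obtain ⟨C, hC⟩ := hbound (ε / 2) (half_pos hε)
  filter_upwards [(isLittleO_const_id_cobounded (E'' := G) C).def (half_pos hε)] with s hs
  calc ‖ω s‖ ≤ ε / 2 * ‖s‖ + C := hC s
    _ ≤ ε / 2 * ‖s‖ + ε / 2 * ‖s‖ := by gcongr; exact (le_abs_self C).trans hs
    _ = ε * ‖id s‖ := by rw [id]; ring

theorem isLittleO_id_cobounded_of_tendsto_div {f : ℝ → ℝ}
    (htop : Tendsto (fun t => f t / t) atTop (nhds 0))
    (hbot : Tendsto (fun t => f t / t) atBot (nhds 0)) : f =o[cobounded ℝ] (id : ℝ → ℝ) := by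
  refine (isLittleO_iff_tendsto' <|
    (eventually_ne_cobounded 0).mono fun _ hne hzero => absurd hzero hne).2 ?_
  rw [IsOrderBornology.cobounded_eq]
  exact hbot.sup htop

variable [NormedSpace ℝ E]

theorem norm_smul_comp_sub_le {ε C : ℝ} (hε : 0 ≤ ε) (hbound : ∀ s, ‖ω s‖ ≤ ε * ‖s‖ + C)
    (a : ℝ) (t u : G) :
    ‖a • ω (t - u)‖ ≤ (ε * ‖t‖ + C) * ‖a‖ + ε * (‖u‖ * ‖a‖) :=
  calc ‖a • ω (t - u)‖ = ‖a‖ * ‖ω (t - u)‖ := norm_smul _ _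
    _ ≤ ‖a‖ * (ε * (‖t‖ + ‖u‖) + C) := by
      gcongr
      exact (hbound _).trans (by gcongr; exact norm_sub_le t u)
    _ = (ε * ‖t‖ + C) * ‖a‖ + ε * (‖u‖ * ‖a‖) := by ring

variable [ProperSpace G] [MeasurableSpace G] {μ : Measure G} {k : G → ℝ}

theorem integrable_smul_comp_sub_of_isLittleO [OpensMeasurableSpace G] (hk : Integrable k μ)
    (hk_moment : Integrable (fun u => ‖u‖ * ‖k u‖) μ) (hω : Continuous ω)
    (hsub : ω =o[cobounded G] (id : G → G)) (t : G) :
    Integrable (fun u => k u • ω (t - u)) μ := by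
  obtain ⟨C, hC⟩ := exists_forall_norm_le_mul_norm_add_of_isLittleO hω hsub one_pos
  refine ((hk.norm.const_mul (1 * ‖t‖ + C)).add (hk_moment.const_mul 1)).mono'
    (hk.aestronglyMeasurable.smul ?_)
    (.of_forall fun u => norm_smul_comp_sub_le zero_le_one hC (k u) t u)
  exact (show Continuous fun u => ω (t - u) by fun_prop).aestronglyMeasurable

theorem isLittleO_integral_smul_comp_sub (hk : Integrable k μ)
    (hk_moment : Integrable (fun u => ‖u‖ * ‖k u‖) μ) (hω : Continuous ω)
    (hsub : ω =o[cobounded G] (id : G → G)) :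
    (fun t => ∫ u, k u • ω (t - u) ∂μ) =o[cobounded G] (id : G → G) := by
  refine isLittleO_id_cobounded_of_forall_exists_norm_le fun ε hε => ?_
  set mass := ∫ u, ‖k u‖ ∂μ
  set moment := ∫ u, ‖u‖ * ‖k u‖ ∂μ
  have hmass : 0 < mass + 1 := by positivity
  set δ := ε / (mass + 1)
  have hδ : 0 < δ := div_pos hε hmass
  have hδ_mass : δ * mass ≤ ε := by
    rw [div_mul_eq_mul_div, div_le_iff₀ hmass]
    gcongr
    exact le_add_of_nonneg_right zero_le_one
  obtain ⟨C, hC⟩ := exists_forall_norm_le_mul_norm_add_of_isLittleO hω hsub hδ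
  refine ⟨C * mass + δ * moment, fun t => ?_⟩
  calc ‖∫ u, k u • ω (t - u) ∂μ‖
      ≤ ∫ u, (δ * ‖t‖ + C) * ‖k u‖ + δ * (‖u‖ * ‖k u‖) ∂μ :=
        norm_integral_le_of_norm_le ((hk.norm.const_mul _).add (hk_moment.const_mul _))
          (.of_forall fun u => norm_smul_comp_sub_le hδ.le hC (k u) t u)
    _ = (δ * ‖t‖ + C) * mass + δ * moment := by
        rw [integral_add (hk.norm.const_mul _) (hk_moment.const_mul _), integral_const_mul,
          integral_const_mul]
    _ = δ * mass * ‖t‖ + (C * mass + δ * moment) := by ring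
    _ ≤ ε * ‖t‖ + (C * mass + δ * moment) := by gcongr

end SublinearGrowth

section ExpPastAverage

open Asymptotics Bornology Set

variable {E : Type*} [NormedAddCommGroup E] [NormedSpace ℝ E] {ω : ℝ → E}

theorem hasDerivAt_integral_Iic [CompleteSpace E] {f : ℝ → E} {a b : ℝ} (hab : a < b)
    (hf : IntegrableOn f (Iic b)) (hfa : ContinuousAt f a) :
    HasDerivAt (fun t => ∫ s in Iic t, f s) (f a) a := by
  have hmeas : StronglyMeasurableAtFilter f (nhds a) :=
    ⟨Iic b, Iic_mem_nhds hab, hf.aestronglyMeasurable⟩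
  have hderiv := (intervalIntegral.integral_hasDerivAt_right
    (IntervalIntegrable.refl (a := a)) hmeas hfa).const_add (∫ s in Iic a, f s)
  refine hderiv.congr_of_eventuallyEq ?_
  filter_upwards [Iic_mem_nhds hab] with t ht
  rw [← intervalIntegral.integral_Iic_sub_Iic (hf.mono_set (Iic_subset_Iic.2 hab.le))
    (hf.mono_set (Iic_subset_Iic.2 ht)), add_sub_cancel]

/-- The average of the values of `ω` before time `t`, with weight `e^{s-t}` (of total mass one) at
time `s`. The Ornstein–Uhlenbeck path driven by `ω` is `ω - expPastAverage ω`. -/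
noncomputable def expPastAverage (ω : ℝ → E) (t : ℝ) : E :=
  ∫ s in Iic t, Real.exp (s - t) • ω s

theorem expPastAverage_eq_exp_neg_smul (ω : ℝ → E) (t : ℝ) :
    expPastAverage ω t = Real.exp (-t) • ∫ s in Iic t, Real.exp s • ω s := by
  simp only [expPastAverage, ← integral_smul, smul_smul, ← Real.exp_add, neg_add_eq_sub]

theorem expPastAverage_eq_integral_Ici (ω : ℝ → E) (t : ℝ) :
    expPastAverage ω t = ∫ u in Ici 0, Real.exp (-u) • ω (t - u) := by
  have hsubst := (volume.measurePreserving_sub_left t).setIntegral_preimage_emb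
    (measurableEmbedding_subLeft t) (fun s => Real.exp (s - t) • ω s) (Iic t)
  simpa [expPastAverage] using hsubst.symm

theorem integrableOn_exp_neg_Ici (c : ℝ) : IntegrableOn (fun u : ℝ => Real.exp (-u)) (Ici c) := by
  rw [integrableOn_Ici_iff_integrableOn_Ioi]
  exact integrableOn_exp_neg_Ioi c

theorem integrableOn_norm_mul_norm_exp_neg_Ici :
    IntegrableOn (fun u : ℝ => ‖u‖ * ‖Real.exp (-u)‖) (Ici 0) := by
  rw [integrableOn_Ici_iff_integrableOn_Ioi]
  refine (Real.GammaIntegral_convergent two_pos).congr_fun (fun u hu => ?_) measurableSet_Ioi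
  have hu : 0 < u := hu
  norm_num [abs_of_pos hu, mul_comm]

theorem integrableOn_exp_smul_Iic_of_isLittleO (hω : Continuous ω)
    (hsub : ω =o[cobounded ℝ] (id : ℝ → ℝ)) (t : ℝ) :
    IntegrableOn (fun s => Real.exp s • ω s) (Iic t) := by
  have hpast : IntegrableOn (fun u => Real.exp (-u) • ω (t - u)) (Ici 0) :=
    integrable_smul_comp_sub_of_isLittleO (integrableOn_exp_neg_Ici 0)
      integrableOn_norm_mul_norm_exp_neg_Ici hω hsub t
  rw [← (volume.measurePreserving_sub_left t).integrableOn_comp_preimage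
    (measurableEmbedding_subLeft t), preimage_const_sub_Iic, sub_self]
  refine (hpast.smul (Real.exp t)).congr (.of_forall fun u => ?_)
  simp only [Pi.smul_apply, Function.comp_apply, smul_smul, ← Real.exp_add, sub_eq_add_neg]

theorem isLittleO_expPastAverage (hω : Continuous ω) (hsub : ω =o[cobounded ℝ] (id : ℝ → ℝ)) :
    expPastAverage ω =o[cobounded ℝ] (id : ℝ → ℝ) := by
  rw [funext (expPastAverage_eq_integral_Ici ω)]
  exact isLittleO_integral_smul_comp_sub (integrableOn_exp_neg_Ici 0)
    integrableOn_norm_mul_norm_exp_neg_Ici hω hsub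

variable [CompleteSpace E]

theorem hasDerivAt_expPastAverage (hω : Continuous ω)
    (hint : ∀ t, IntegrableOn (fun s => Real.exp s • ω s) (Iic t)) (t : ℝ) :
    HasDerivAt (expPastAverage ω) (ω t - expPastAverage ω t) t := by
  have hintegral : HasDerivAt (fun t => ∫ s in Iic t, Real.exp s • ω s) (Real.exp t • ω t) t :=
    hasDerivAt_integral_Iic (lt_add_one t) (hint _) (by fun_prop)
  rw [funext (expPastAverage_eq_exp_neg_smul ω)]
  refine ((hasDerivAt_neg t).exp.smul hintegral).congr_deriv ?_
  rw [smul_smul, ← Real.exp_add, neg_add_cancel, Real.exp_zero, one_smul, mul_neg_one, neg_smul,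
    ← sub_eq_add_neg]

theorem integral_sub_expPastAverage (hω : Continuous ω)
    (hint : ∀ t, IntegrableOn (fun s => Real.exp s • ω s) (Iic t)) (a b : ℝ) :
    ∫ s in a..b, (ω s - expPastAverage ω s) = expPastAverage ω b - expPastAverage ω a := by
  have hderiv := hasDerivAt_expPastAverage hω hint
  have hcont : Continuous (expPastAverage ω) :=
    continuous_iff_continuousAt.2 fun t => (hderiv t).continuousAt
  exact intervalIntegral.integral_eq_sub_of_hasDerivAt (fun t _ => hderiv t)
    ((hω.sub hcont).intervalIntegrable a b)

theorem stmt_8_general (hω : Continuous ω) (hsub : ω =o[cobounded ℝ] (id : ℝ → ℝ)) :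
    Tendsto (fun t : ℝ => t⁻¹ • ∫ s in 0..t, (ω s - expPastAverage ω s)) (cobounded ℝ)
      (nhds 0) := by
  simp only [integral_sub_expPastAverage hω (integrableOn_exp_smul_Iic_of_isLittleO hω hsub)]
  exact ((isLittleO_expPastAverage hω hsub).sub
    (isLittleO_const_id_cobounded _)).tendsto_inv_smul_nhds_zero

end ExpPastAverage

/-- The Cesàro mean of the stationary Ornstein–Uhlenbeck process `z_ω` along the
orbit vanishes at `±∞` when the driving path `ω` has sublinear growth. -/
theorem stmt_8 (ω : ℝ → ℝ) (hω : Continuous ω)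
    (hsub_top : Tendsto (fun t => ω t / t) atTop (nhds 0))
    (hsub_bot : Tendsto (fun t => ω t / t) atBot (nhds 0))
    (hint : IntegrableOn (fun s => Real.exp s * ω s) (Set.Iic 0))
    (zω : ℝ → ℝ)
    (hzω : ∀ t, zω t = ω t - ∫ s in Set.Iic t, Real.exp (s - t) * ω s) :
    Tendsto (fun t => (1 / t) * ∫ s in (0:ℝ)..t, zω s) atTop (nhds 0) ∧
    Tendsto (fun t => (1 / t) * ∫ s in (0:ℝ)..t, zω s) atBot (nhds 0) := by
  obtain rfl : zω = fun t => ω t - expPastAverage ω t := funext hzω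
  have hmean := stmt_8_general hω (isLittleO_id_cobounded_of_tendsto_div hsub_top hsub_bot)
  rw [IsOrderBornology.cobounded_eq, tendsto_sup] at hmean
  simpa only [one_div, smul_eq_mul] using hmean.symm
end
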